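/- Surjective-on-objects lenses are orthogonal to cosieve lenses in the category of small categories and lenses: given lenses (e, ε) : A ⇌ B with e surjective on objects, (m, μ) : C ⇌ D with m an injective-on-objects discrete opfibration, and lenses (f, φ) : A ⇌ C and (g, γ) : B ⇌ D such that the composite of (e, ε) followed by (g, γ) equals the composite of (f, φ) followed by (m, μ) as lenses, there exists a unique lens (h, θ) : B ⇌ C such that the composite of (e, ε) followed by (h, θ) equals (f, φ) and the composite of (h, θ) followed by (m, μ) equals (g, γ) as lenses. -/

import Mathlib

open CategoryTheory

universe u

/-- A functor `F` is a discrete opfibration if for every object `a` of its domain and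
every morphism `u : F.obj a ⟶ b` of its codomain, there exists a unique morphism `w`
with domain `a` such that `F.map w = u` (up to the identification of codomains). -/
def IsDiscreteOpfibration {A B : Type u} [SmallCategory A] [SmallCategory B]
    (F : A ⥤ B) : Prop :=
  ∀ ⦃a : A⦄ ⦃b : B⦄ (u : F.obj a ⟶ b),
    ∃! w : Σ a' : A, a ⟶ a', ∃ h : F.obj w.1 = b, F.map w.2 = u ≫ eqToHom h.symm

/-- A (delta) lens between small categories: a functor together with a lifting
operation satisfying the three lens axioms. `lift u` packages the codomain
`a'` of the chosen lift together with the lift `a ⟶ a'` itself. -/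
structure Lens (A B : Type u) [SmallCategory A] [SmallCategory B] where
  /-- the underlying (Get) functor -/
  func : A ⥤ B
  /-- the lifting (Put) operation -/
  lift : ∀ ⦃a : A⦄ ⦃b : B⦄, (func.obj a ⟶ b) → Σ a' : A, a ⟶ a'
  /-- the codomain of the lift lies over the codomain of the lifted morphism -/
  lift_cod : ∀ ⦃a : A⦄ ⦃b : B⦄ (u : func.obj a ⟶ b), func.obj (lift u).1 = b
  /-- axiom (1): `f (φ (a, u)) = u` -/
  lift_map : ∀ ⦃a : A⦄ ⦃b : B⦄ (u : func.obj a ⟶ b),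
      func.map (lift u).2 = u ≫ eqToHom (lift_cod u).symm
  /-- axiom (2): `φ (a, 1) = 1` -/
  lift_id : ∀ a : A, lift (𝟙 (func.obj a)) = ⟨a, 𝟙 a⟩
  /-- axiom (3): `φ (a, v ∘ u) = φ (a', v) ∘ φ (a, u)` -/
  lift_comp : ∀ ⦃a : A⦄ ⦃b c : B⦄ (u : func.obj a ⟶ b) (v : b ⟶ c),
      lift (u ≫ v) = ⟨(lift (eqToHom (lift_cod u) ≫ v)).1,
        (lift u).2 ≫ (lift (eqToHom (lift_cod u) ≫ v)).2⟩

namespace Lens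

variable {A B C : Type u} [SmallCategory A] [SmallCategory B] [SmallCategory C]

theorem lift_eqToHom (L : Lens A B) {a a' : A} (h : a' = a) {b : B}
    (u : L.func.obj a ⟶ b) (h' : L.func.obj a' = L.func.obj a) :
    L.lift (eqToHom h' ≫ u) = ⟨(L.lift u).1, eqToHom h ≫ (L.lift u).2⟩ := by
  subst h; simp

/-- The identity lens on a small category. -/
def id (A : Type u) [SmallCategory A] : Lens A A where
  func := Functor.id A
  lift _ b u := ⟨b, u⟩
  lift_cod _ _ _ := rfl
  lift_map := by intros; simp
  lift_id := by intros; rfl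
  lift_comp := by intros; simp

/-- Composition of lenses: `(L.comp M).lift u = L.lift ((M.lift u).2)`. -/
def comp (L : Lens A B) (M : Lens B C) : Lens A C where
  func := L.func ⋙ M.func
  lift _ _ u := L.lift (M.lift u).2
  lift_cod a c u := by
    show M.func.obj (L.func.obj _) = c
    rw [L.lift_cod]
    exact M.lift_cod u
  lift_map a c u := by
    show M.func.map (L.func.map _) = _
    rw [L.lift_map, Functor.map_comp, M.lift_map, eqToHom_map]
    simp
  lift_id a := by
    show L.lift (M.lift (𝟙 (M.func.obj (L.func.obj a)))).2 = _
    rw [M.lift_id]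
    exact L.lift_id a
  lift_comp a c c' u v := by
    show L.lift (M.lift (u ≫ v)).2 = _
    rw [M.lift_comp u v]
    show L.lift ((M.lift u).2 ≫ (M.lift (eqToHom (M.lift_cod u) ≫ v)).2) = _
    rw [L.lift_comp]
    have key : M.lift (eqToHom (show (L.func ⋙ M.func).obj (L.lift (M.lift u).2).1 = c by
          show M.func.obj (L.func.obj _) = c; rw [L.lift_cod]; exact M.lift_cod u) ≫ v)
        = ⟨(M.lift (eqToHom (M.lift_cod u) ≫ v)).1,
            eqToHom (L.lift_cod (M.lift u).2) ≫ (M.lift (eqToHom (M.lift_cod u) ≫ v)).2⟩ := by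
      rw [show (eqToHom (show (L.func ⋙ M.func).obj (L.lift (M.lift u).2).1 = c by
          show M.func.obj (L.func.obj _) = c; rw [L.lift_cod]; exact M.lift_cod u) ≫ v)
        = eqToHom (congrArg M.func.obj (L.lift_cod (M.lift u).2)) ≫ (eqToHom (M.lift_cod u) ≫ v) by
          rw [← Category.assoc, eqToHom_trans]]
      exact M.lift_eqToHom (L.lift_cod (M.lift u).2) _ _
    beta_reduce
    rw [key]

/-- A lens is a monomorphism in the category of small categories and lenses if it is
left-cancellable with respect to lens composition. -/
def IsMono (f : Lens A B) : Prop :=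
  ∀ ⦃D : Type u⦄ [SmallCategory D], ∀ x y : Lens D A, x.comp f = y.comp f → x = y

/-- A lens is an epimorphism in the category of small categories and lenses if it is
right-cancellable with respect to lens composition. -/
def IsEpi (f : Lens A B) : Prop :=
  ∀ ⦃C : Type u⦄ [SmallCategory C], ∀ x y : Lens B C, f.comp x = f.comp y → x = y

end Lens

namespace IsDiscreteOpfibration

variable {A B : Type u} [SmallCategory A] [SmallCategory B] {F : A ⥤ B}

theorem faithful (hF : IsDiscreteOpfibration F) : F.Faithful where
  map_injective {a a'} w w' hw := by
    have key := (hF (F.map w)).unique (y₁ := ⟨a', w⟩) (y₂ := ⟨a', w'⟩)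
      ⟨rfl, by simp⟩ ⟨rfl, by simp [hw]⟩
    simpa using key

theorem full (hF : IsDiscreteOpfibration F) (hobj : Function.Injective F.obj) : F.Full where
  map_surjective {a a'} u := by
    obtain ⟨⟨x, w⟩, ⟨hx, hw⟩, -⟩ := hF u
    obtain rfl : x = a' := hobj hx
    exact ⟨w, by simpa using hw⟩

end IsDiscreteOpfibration

namespace Lens

variable {A B C D : Type u} [SmallCategory A] [SmallCategory B] [SmallCategory C]
  [SmallCategory D]

theorem ext_of_lift {L M : Lens A B} (hfunc : L.func = M.func)
    (hlift : ∀ ⦃a : A⦄ ⦃b : B⦄ (u : L.func.obj a ⟶ b),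
      L.lift u = M.lift (eqToHom (Functor.congr_obj hfunc a).symm ≫ u)) : L = M := by
  obtain ⟨F, l, _, _, _, _⟩ := L
  obtain ⟨G, k, _, _, _, _⟩ := M
  obtain rfl : F = G := hfunc
  obtain rfl : @l = @k := by
    funext a b u
    simpa using hlift u
  rfl

theorem lift_congr {L M : Lens A B} (h : L = M) {a : A} {b : B} (u : L.func.obj a ⟶ b)
    (ha : M.func.obj a = L.func.obj a) : L.lift u = M.lift (eqToHom ha ≫ u) := by
  subst h
  simp

theorem lift_comp_eqToHom (L : Lens A B) {a : A} {b b' : B} (u : L.func.obj a ⟶ b)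
    (h : b = b') : L.lift (u ≫ eqToHom h) = L.lift u := by
  subst h
  simp

/-- A lens whose functor is a discrete opfibration lifts `m.func.map v` to `v`. -/
theorem lift_map_of_isDiscreteOpfibration (m : Lens C D) (hm : IsDiscreteOpfibration m.func)
    {c c' : C} (v : c ⟶ c') : m.lift (m.func.map v) = ⟨c', v⟩ :=
  (hm (m.func.map v)).unique ⟨m.lift_cod _, m.lift_map _⟩ ⟨rfl, by simp⟩

/-- The lifting operation of the first factor of a composite with a discrete opfibration lens is
determined by the composite. -/
theorem lift_eq_comp_lift_map (x : Lens B C) (m : Lens C D) (hm : IsDiscreteOpfibration m.func)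
    {b : B} {c : C} (v : x.func.obj b ⟶ c) : x.lift v = (x.comp m).lift (m.func.map v) := by
  change x.lift v = x.lift (m.lift (m.func.map v)).2
  rw [m.lift_map_of_isDiscreteOpfibration hm]

/-- A cosieve lens is a monomorphism. -/
theorem isMono_of_cosieve (m : Lens C D) (hobj : Function.Injective m.func.obj)
    (hm : IsDiscreteOpfibration m.func) : m.IsMono := by
  intro B _ x y hxy
  have hcomp : x.func ⋙ m.func = y.func ⋙ m.func := congrArg Lens.func hxy
  have := hm.faithful
  have hfunc : x.func = y.func := by
    refine CategoryTheory.Functor.ext (fun b => hobj (Functor.congr_obj hcomp b)) fun b b' u => ?_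
    apply m.func.map_injective
    simpa [eqToHom_map] using Functor.congr_hom hcomp u
  refine ext_of_lift hfunc fun b c v => ?_
  have hmap : eqToHom (Functor.congr_obj hcomp b).symm ≫ m.func.map v =
      m.func.map (eqToHom (Functor.congr_obj hfunc b).symm ≫ v) := by
    rw [Functor.map_comp, eqToHom_map]
  calc x.lift v = (x.comp m).lift (m.func.map v) := x.lift_eq_comp_lift_map m hm v
    _ = (y.comp m).lift (eqToHom (Functor.congr_obj hcomp b).symm ≫ m.func.map v) :=
      lift_congr hxy _ _
    _ = (y.comp m).lift (m.func.map (eqToHom (Functor.congr_obj hfunc b).symm ≫ v)) :=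
      congrArg (fun w => (y.comp m).lift w) hmap
    _ = y.lift (eqToHom (Functor.congr_obj hfunc b).symm ≫ v) :=
      (y.lift_eq_comp_lift_map m hm _).symm

section Factor

variable (m : Lens C D) (hobj : Function.Injective m.func.obj) (g : Lens B D)
  (hb : B → C) (hg : ∀ b, m.func.obj (hb b) = g.func.obj b)

/-- The factorisation of a functor through a fully faithful functor, given on objects. -/
noncomputable def factorFunctor [m.func.Full] [m.func.Faithful] : B ⥤ C where
  obj := hb
  map {b b'} u := m.func.preimage (eqToHom (hg b) ≫ g.func.map u ≫ eqToHom (hg b').symm)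
  map_id b := m.func.map_injective (by simp)
  map_comp u v := m.func.map_injective (by simp)

/-- The factorisation of a lens through a fully faithful lens that is injective on objects. -/
noncomputable def factor [m.func.Full] [m.func.Faithful] : Lens B C where
  func := factorFunctor m g hb hg
  lift b _ v := g.lift (eqToHom (hg b).symm ≫ m.func.map v)
  lift_cod b c v := hobj ((hg _).trans (g.lift_cod _))
  lift_map b c v := m.func.map_injective (by
    rw [Functor.map_comp, eqToHom_map]
    simp [factorFunctor, g.lift_map])
  lift_id b := by
    have key : eqToHom (hg b).symm ≫ m.func.map (𝟙 (hb b)) ≫ eqToHom (hg b) =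
        𝟙 (g.func.obj b) := by simp
    rw [← g.lift_id b, ← key, ← Category.assoc, g.lift_comp_eqToHom]
    rfl
  lift_comp b c c' u v := by
    have key (u : hb b ⟶ c) (hx : hb (g.lift (eqToHom (hg b).symm ≫ m.func.map u)).1 = c) :
        g.lift (eqToHom (hg b).symm ≫ m.func.map (u ≫ v)) =
          ⟨(g.lift (eqToHom (hg _).symm ≫ m.func.map (eqToHom hx ≫ v))).1,
            (g.lift (eqToHom (hg b).symm ≫ m.func.map u)).2 ≫
              (g.lift (eqToHom (hg _).symm ≫ m.func.map (eqToHom hx ≫ v))).2⟩ := by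
      rw [m.func.map_comp u v, ← Category.assoc, g.lift_comp, m.func.map_comp (eqToHom hx) v,
        eqToHom_map, ← Category.assoc, eqToHom_trans]
    exact key u _

theorem factor_comp [m.func.Full] [m.func.Faithful] :
    (factor m hobj g hb hg).comp m = g := by
  refine ext_of_lift
    (CategoryTheory.Functor.ext hg fun b b' u => by simp [comp, factor, factorFunctor])
    fun b d u => ?_
  have key (u : m.func.obj (hb b) ⟶ d) :
      g.lift (eqToHom (hg b).symm ≫ m.func.map (m.lift u).2) =
        g.lift (eqToHom (hg b).symm ≫ u) := by
    rw [m.lift_map, ← Category.assoc, g.lift_comp_eqToHom]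
  exact key u

end Factor

theorem comp_assoc (x : Lens A B) (y : Lens B C) (z : Lens C D) :
    (x.comp y).comp z = x.comp (y.comp z) := rfl

end Lens

/-- Surjective-on-objects lenses are orthogonal to cosieve lenses (lenses whose
underlying functor is an injective-on-objects discrete opfibration) in the category of
small categories and lenses. -/
theorem lens_orthogonality {A B C D : Type u}
    [SmallCategory A] [SmallCategory B] [SmallCategory C] [SmallCategory D]
    (e : Lens A B) (he : Function.Surjective e.func.obj)
    (m : Lens C D) (hm₁ : Function.Injective m.func.obj)
    (hm₂ : IsDiscreteOpfibration m.func)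
    (f : Lens A C) (g : Lens B D) (hsq : e.comp g = f.comp m) :
    ∃! h : Lens B C, e.comp h = f ∧ h.comp m = g := by
  have := hm₂.faithful
  have := hm₂.full hm₁
  have hmono := m.isMono_of_cosieve hm₁ hm₂
  have hlift : ∀ b, ∃ c, m.func.obj c = g.func.obj b := fun b => by
    obtain ⟨a, rfl⟩ := he b
    exact ⟨f.func.obj a, (Functor.congr_obj (congrArg Lens.func hsq) a).symm⟩
  choose hb hg using hlift
  have hcomp := Lens.factor_comp m hm₁ g hb hg
  refine ⟨Lens.factor m hm₁ g hb hg, ⟨hmono _ _ ?_, hcomp⟩, fun h' hh' => ?_⟩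
  · rw [Lens.comp_assoc, hcomp, hsq]
  · exact hmono _ _ (hh'.2.trans hcomp.symm)
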